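/- Fix b ∈ ℝ and ω > 0. Let t ≥ 0, η ∈ ℝ², and let y ∈ ℝ², y ≠ 0, be such that x^s(y,η) ≠ 0 for all s ∈ [0,t] (a condition that holds on a neighborhood of y). Then the action S(t,·,η), where S(t,y,η) := (1/2)∫₀ᵗ (|ξ^s|² − |A(x^s)|² − ω²|x^s|²) ds, is differentiable in y and its gradient satisfies ∇_y S(t,y,η) = (x^t_y)ᵀ ξ^t(y,η) − η, where x^t_y = cos(ωt)·I − (sin(ωt)/ω)·A_x(y) is the Jacobian matrix of x^t with respect to y and A_x(y) is the Jacobian matrix of A at y. -/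

import Mathlib

/-- The Aharonov–Bohm vector potential with flux `b`:
`A(x) = (−b x₂/|x|², b x₁/|x|²)` for `x ∈ ℝ² \ {0}`. -/
noncomputable def A (b : ℝ) (x : ℝ × ℝ) : ℝ × ℝ :=
  (-b * x.2 / (x.1 ^ 2 + x.2 ^ 2), b * x.1 / (x.1 ^ 2 + x.2 ^ 2))

/-- The wedge product `u ∧ v = u₁v₂ − u₂v₁` on `ℝ²`. -/
def wedge (u v : ℝ × ℝ) : ℝ := u.1 * v.2 - u.2 * v.1

/-- The Euclidean inner product on `ℝ²`. -/
def dot (u v : ℝ × ℝ) : ℝ := u.1 * v.1 + u.2 * v.2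

/-- The squared Euclidean norm on `ℝ²`. -/
def normSq2 (u : ℝ × ℝ) : ℝ := u.1 ^ 2 + u.2 ^ 2

/-- The classical trajectory `x^t(y,η) = cos(ωt)·y + (sin(ωt)/ω)·(η − A(y))`. -/
noncomputable def traj (b ω : ℝ) (y η : ℝ × ℝ) (t : ℝ) : ℝ × ℝ :=
  Real.cos (ω * t) • y + (Real.sin (ω * t) / ω) • (η - A b y)

/-- The momentum `ξ^s(y,η) = (d/ds)x^s + A(x^s)`, defined when `x^s ≠ 0`. -/
noncomputable def xi (b ω : ℝ) (y η : ℝ × ℝ) (s : ℝ) : ℝ × ℝ :=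
  deriv (traj b ω y η) s + A b (traj b ω y η s)

/-- The action `S(t,y,η) = (1/2)∫₀ᵗ (|ξ^s|² − |A(x^s)|² − ω²|x^s|²) ds`. -/
noncomputable def action (b ω : ℝ) (y η : ℝ × ℝ) (t : ℝ) : ℝ :=
  (1 / 2) * ∫ s in (0 : ℝ)..t,
    (normSq2 (xi b ω y η s) - normSq2 (A b (traj b ω y η s))
      - ω ^ 2 * normSq2 (traj b ω y η s))

/-- The Jacobian matrix of the Aharonov–Bohm potential `A` at `x ≠ 0`. -/
noncomputable def Amat (b : ℝ) (x : ℝ × ℝ) : Matrix (Fin 2) (Fin 2) ℝ :=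
  (b / (normSq2 x) ^ 2) •
    !![2 * x.1 * x.2, x.2 ^ 2 - x.1 ^ 2; x.2 ^ 2 - x.1 ^ 2, -(2 * x.1 * x.2)]

/-- The Jacobian matrix of `x^t` with respect to `y`:
`x^t_y = cos(ωt)·I − (sin(ωt)/ω)·A_x(y)`. -/
noncomputable def trajJacY (b ω : ℝ) (y : ℝ × ℝ) (t : ℝ) :
    Matrix (Fin 2) (Fin 2) ℝ :=
  Real.cos (ω * t) • (1 : Matrix (Fin 2) (Fin 2) ℝ) -
    (Real.sin (ω * t) / ω) • Amat b y

/-- View a pair as a vector indexed by `Fin 2`. -/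
def toVec (p : ℝ × ℝ) : Fin 2 → ℝ := ![p.1, p.2]

/-- View a vector indexed by `Fin 2` as a pair. -/
def toPair (v : Fin 2 → ℝ) : ℝ × ℝ := (v 0, v 1)

open MeasureTheory Set Filter Topology in
/-- Differentiation under the integral sign over a compact interval, for an integrand which is
jointly `C¹` near the slice `{x₀} × [a, b]`. -/
theorem hasFDerivAt_intervalIntegral_of_contDiffAt {H : Type*} [NormedAddCommGroup H]
    [NormedSpace ℝ H] {F : H → ℝ → ℝ} {x₀ : H} {a b : ℝ}
    (hF : ∀ s ∈ uIcc a b, ContDiffAt ℝ 1 (Function.uncurry F) (x₀, s)) :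
    IntervalIntegrable (fun s => (fderiv ℝ (Function.uncurry F) (x₀, s)).comp
        (ContinuousLinearMap.inl ℝ H ℝ)) volume a b ∧
      HasFDerivAt (fun x => ∫ s in a..b, F x s)
        (∫ s in a..b, (fderiv ℝ (Function.uncurry F) (x₀, s)).comp
          (ContinuousLinearMap.inl ℝ H ℝ)) x₀ := by
  set U : Set (H × ℝ) := {p | ContDiffAt ℝ 1 (Function.uncurry F) p}
  set D : H × ℝ → H →L[ℝ] ℝ := fun p => (fderiv ℝ (Function.uncurry F) p).comp
    (ContinuousLinearMap.inl ℝ H ℝ)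
  have hUC : ∀ p ∈ U, ContDiffAt ℝ 1 (Function.uncurry F) p := fun p hp => hp
  have hUo : IsOpen U := isOpen_iff_mem_nhds.2 fun p hp =>
    (hUC p hp).eventually (by simp)
  have hDc : ContinuousOn D U := fun p hp => by
    have h : ContinuousAt (fderiv ℝ (Function.uncurry F)) p :=
      (hUC p hp).continuousAt_fderiv (by simp)
    exact (h.clm_comp continuousAt_const).continuousWithinAt
  have hslice : ({x₀} : Set H) ×ˢ uIcc a b ⊆ U := by
    rintro ⟨x, s⟩ ⟨rfl, hs⟩
    exact hF s hs
  have hsl : ∀ x, Continuous fun s : ℝ => ((x, s) : H × ℝ) := fun x =>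
    Continuous.prodMk_right x
  obtain ⟨M, hM⟩ := (isCompact_singleton.prod isCompact_uIcc).exists_bound_of_continuousOn
    (hDc.mono hslice)
  have hUM : IsOpen (U ∩ (fun p => ‖D p‖) ⁻¹' Iio (M + 1)) :=
    hDc.norm.isOpen_inter_preimage hUo isOpen_Iio
  obtain ⟨V, W, hVo, -, hV, hW, hVW⟩ := generalized_tube_lemma (isCompact_singleton (x := x₀))
    (isCompact_uIcc (a := a) (b := b)) hUM fun p hp =>
      ⟨hslice hp, (hM p hp).trans_lt (by simp)⟩
  have hVn : V ∈ 𝓝 x₀ := hVo.mem_nhds (hV rfl)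
  have hmem : ∀ x ∈ V, ∀ s ∈ uIcc a b, (x, s) ∈ U ∧ ‖D (x, s)‖ < M + 1 :=
    fun x hx s hs => hVW ⟨hx, hW hs⟩
  have hcF : ∀ x ∈ V, ContinuousOn (F x) (uIcc a b) := fun x hx s hs => by
    have h : ContinuousAt (Function.uncurry F) (x, s) := (hUC _ (hmem x hx s hs).1).continuousAt
    exact (ContinuousAt.comp (f := fun s : ℝ => (x, s)) h
      (hsl x).continuousAt).continuousWithinAt
  have hcD : ContinuousOn (fun s => D (x₀, s)) (uIcc a b) :=
    hDc.comp (hsl x₀).continuousOn fun s hs => hF s hs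
  refine ⟨hcD.intervalIntegrable, ?_⟩
  refine intervalIntegral.hasFDerivAt_integral_of_dominated_of_fderiv_le
    (F' := fun x s => D (x, s)) (bound := fun _ => M + 1) hVn ?_ ?_ ?_ ?_ ?_ ?_
  · filter_upwards [hVn] with x hx
    exact ((hcF x hx).mono uIoc_subset_uIcc).aestronglyMeasurable measurableSet_uIoc
  · exact (hcF x₀ (hV rfl)).intervalIntegrable
  · exact (hcD.mono uIoc_subset_uIcc).aestronglyMeasurable measurableSet_uIoc
  · exact ae_of_all _ fun s hs x hx => (hmem x hx s (uIoc_subset_uIcc hs)).2.le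
  · exact intervalIntegrable_const
  · refine ae_of_all _ fun s hs x hx => ?_
    have h : HasFDerivAt (Function.uncurry F) (fderiv ℝ (Function.uncurry F) (x, s)) (x, s) :=
      ((hUC _ (hmem x hx s (uIoc_subset_uIcc hs)).1).differentiableAt (by simp)).hasFDerivAt
    exact HasFDerivAt.comp x (f := fun x : H => (x, s)) h (hasFDerivAt_prodMk_left x s)

theorem sq_add_sq_ne_zero_of_ne_zero {x : ℝ × ℝ} (hx : x ≠ 0) : x.1 ^ 2 + x.2 ^ 2 ≠ 0 := by
  intro h
  apply hx
  ext
  · exact pow_eq_zero_iff two_ne_zero |>.1 (by nlinarith [sq_nonneg x.1, sq_nonneg x.2])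
  · exact pow_eq_zero_iff two_ne_zero |>.1 (by nlinarith [sq_nonneg x.1, sq_nonneg x.2])

/-- The velocity `(d/ds)x^s = −ω sin(ωs)·y + cos(ωs)·(η − A(y))` of the trajectory. -/
noncomputable def vel (b ω : ℝ) (y η : ℝ × ℝ) (s : ℝ) : ℝ × ℝ :=
  (-(ω * Real.sin (ω * s))) • y + Real.cos (ω * s) • (η - A b y)

/-- The integrand of the action. -/
noncomputable def lagrangian (b ω : ℝ) (η y : ℝ × ℝ) (s : ℝ) : ℝ :=
  1 / 2 * (normSq2 (vel b ω y η s + A b (traj b ω y η s))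
    - normSq2 (A b (traj b ω y η s)) - ω ^ 2 * normSq2 (traj b ω y η s))

theorem hasDerivAt_cos_mul (ω s : ℝ) :
    HasDerivAt (fun s => Real.cos (ω * s)) (-(ω * Real.sin (ω * s))) s := by
  have h := ((hasDerivAt_id s).const_mul ω).cos
  simp only [id] at h
  convert h using 1
  ring

theorem hasDerivAt_sin_mul (ω s : ℝ) :
    HasDerivAt (fun s => Real.sin (ω * s)) (ω * Real.cos (ω * s)) s := by
  have h := ((hasDerivAt_id s).const_mul ω).sin
  simp only [id] at h
  convert h using 1
  ring

theorem hasDerivAt_cos_sin_div {ω : ℝ} (hω : ω ≠ 0) (u p s : ℝ) :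
    HasDerivAt (fun s => Real.cos (ω * s) * u + Real.sin (ω * s) / ω * p)
      (-(ω * Real.sin (ω * s)) * u + Real.cos (ω * s) * p) s := by
  refine (((hasDerivAt_cos_mul ω s).mul_const u).add
    (((hasDerivAt_sin_mul ω s).div_const ω).mul_const p)).congr_deriv ?_
  field_simp

theorem hasDerivAt_sin_cos {ω : ℝ} (hω : ω ≠ 0) (u p s : ℝ) :
    HasDerivAt (fun s => -(ω * Real.sin (ω * s)) * u + Real.cos (ω * s) * p)
      (-ω ^ 2 * (Real.cos (ω * s) * u + Real.sin (ω * s) / ω * p)) s := by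
  refine (((((hasDerivAt_sin_mul ω s).const_mul ω).neg).mul_const u).add
    ((hasDerivAt_cos_mul ω s).mul_const p)).congr_deriv ?_
  field_simp
  ring

theorem hasDerivAt_traj {b ω : ℝ} (hω : ω ≠ 0) (y η : ℝ × ℝ) (s : ℝ) :
    HasDerivAt (traj b ω y η) (vel b ω y η s) s :=
  (hasDerivAt_cos_sin_div hω y.1 _ s).prodMk (hasDerivAt_cos_sin_div hω y.2 _ s)

theorem contDiffAt_A (b : ℝ) {x : ℝ × ℝ} (hx : x ≠ 0) : ContDiffAt ℝ 1 (A b) x := by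
  have h := sq_add_sq_ne_zero_of_ne_zero hx
  unfold A
  fun_prop (disch := assumption)

theorem contDiffAt_lagrangian {b ω : ℝ} {y η : ℝ × ℝ} {s : ℝ} (hy : y ≠ 0)
    (hx : traj b ω y η s ≠ 0) :
    ContDiffAt ℝ 1 (Function.uncurry (lagrangian b ω η)) (y, s) := by
  have hA : ContDiffAt ℝ 1 (fun p : (ℝ × ℝ) × ℝ => A b p.1) (y, s) :=
    ContDiffAt.comp (g := A b) (f := Prod.fst) (y, s) (contDiffAt_A b hy) contDiffAt_fst
  have hsin : ContDiffAt ℝ 1 (fun p : (ℝ × ℝ) × ℝ => Real.sin (ω * p.2)) (y, s) :=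
    (contDiffAt_const.mul contDiffAt_snd).sin
  have hcos : ContDiffAt ℝ 1 (fun p : (ℝ × ℝ) × ℝ => Real.cos (ω * p.2)) (y, s) :=
    (contDiffAt_const.mul contDiffAt_snd).cos
  have hX : ContDiffAt ℝ 1 (fun p : (ℝ × ℝ) × ℝ => traj b ω p.1 η p.2) (y, s) :=
    (hcos.smul contDiffAt_fst).add
      ((hsin.div_const ω).smul (contDiffAt_const.sub hA))
  have hV : ContDiffAt ℝ 1 (fun p : (ℝ × ℝ) × ℝ => vel b ω p.1 η p.2) (y, s) :=
    ((contDiffAt_const.mul hsin).neg.smul contDiffAt_fst).add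
      (hcos.smul (contDiffAt_const.sub hA))
  have hAX : ContDiffAt ℝ 1 (fun p : (ℝ × ℝ) × ℝ => A b (traj b ω p.1 η p.2)) (y, s) :=
    ContDiffAt.comp (g := A b) (f := fun p : (ℝ × ℝ) × ℝ => traj b ω p.1 η p.2) (y, s)
      (contDiffAt_A b hx) hX
  have hsq : ∀ {f : (ℝ × ℝ) × ℝ → ℝ × ℝ}, ContDiffAt ℝ 1 f (y, s) →
      ContDiffAt ℝ 1 (fun p => normSq2 (f p)) (y, s) :=
    fun hf => (hf.fst.pow 2).add (hf.snd.pow 2)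
  exact contDiffAt_const.mul
    (((hsq (hV.add hAX)).sub (hsq hAX)).sub (contDiffAt_const.mul (hsq hX)))

/-- The derivative of the potential at `x` in the direction `v`. -/
noncomputable def dA (b : ℝ) (x v : ℝ × ℝ) : ℝ × ℝ :=
  (b / (x.1 ^ 2 + x.2 ^ 2) ^ 2 * (2 * x.1 * x.2 * v.1 + (x.2 ^ 2 - x.1 ^ 2) * v.2),
    b / (x.1 ^ 2 + x.2 ^ 2) ^ 2 * ((x.2 ^ 2 - x.1 ^ 2) * v.1 - 2 * x.1 * x.2 * v.2))

theorem hasDerivAt_fst {u : ℝ → ℝ × ℝ} {u' : ℝ × ℝ} {s : ℝ} (hu : HasDerivAt u u' s) :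
    HasDerivAt (fun s => (u s).1) u'.1 s :=
  (ContinuousLinearMap.fst ℝ ℝ ℝ).hasFDerivAt.comp_hasDerivAt s hu

theorem hasDerivAt_snd {u : ℝ → ℝ × ℝ} {u' : ℝ × ℝ} {s : ℝ} (hu : HasDerivAt u u' s) :
    HasDerivAt (fun s => (u s).2) u'.2 s :=
  (ContinuousLinearMap.snd ℝ ℝ ℝ).hasFDerivAt.comp_hasDerivAt s hu

theorem hasDerivAt_A_comp {b τ : ℝ} {f : ℝ → ℝ × ℝ} {f' : ℝ × ℝ} (hf : HasDerivAt f f' τ)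
    (h : f τ ≠ 0) : HasDerivAt (fun τ => A b (f τ)) (dA b (f τ) f') τ := by
  have h0 := sq_add_sq_ne_zero_of_ne_zero h
  have h1 := hasDerivAt_fst hf
  have h2 := hasDerivAt_snd hf
  refine HasDerivAt.prodMk ?_ ?_
  · refine ((h2.const_mul (-b)).div ((h1.pow 2).add (h2.pow 2)) h0).congr_deriv ?_
    simp
    field_simp
    ring
  · refine ((h1.const_mul b).div ((h1.pow 2).add (h2.pow 2)) h0).congr_deriv ?_
    simp
    field_simp
    ring

/-- The derivative of `x^s` with respect to `y` in the direction `v`. -/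
noncomputable def trajVar (b ω : ℝ) (y v : ℝ × ℝ) (s : ℝ) : ℝ × ℝ :=
  Real.cos (ω * s) • v + (Real.sin (ω * s) / ω) • -dA b y v

/-- The derivative of the velocity with respect to `y` in the direction `v`. -/
noncomputable def velVar (b ω : ℝ) (y v : ℝ × ℝ) (s : ℝ) : ℝ × ℝ :=
  (-(ω * Real.sin (ω * s))) • v + Real.cos (ω * s) • -dA b y v

theorem hasDerivAt_dot {u v : ℝ → ℝ × ℝ} {u' v' : ℝ × ℝ} {s : ℝ} (hu : HasDerivAt u u' s)
    (hv : HasDerivAt v v' s) :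
    HasDerivAt (fun s => dot (u s) (v s)) (dot u' (v s) + dot (u s) v') s := by
  refine (((hasDerivAt_fst hu).mul (hasDerivAt_fst hv)).add
    ((hasDerivAt_snd hu).mul (hasDerivAt_snd hv))).congr_deriv ?_
  simp only [dot]
  ring

theorem hasDerivAt_normSq2 {u : ℝ → ℝ × ℝ} {u' : ℝ × ℝ} {s : ℝ} (hu : HasDerivAt u u' s) :
    HasDerivAt (fun s => normSq2 (u s)) (2 * dot (u s) u') s := by
  refine (((hasDerivAt_fst hu).pow 2).add ((hasDerivAt_snd hu).pow 2)).congr_deriv ?_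
  simp [dot]
  ring

/-- The directional derivative of the Lagrangian in `y` is a total derivative in time. -/
theorem hasDerivAt_dot_momentum_trajVar {b ω : ℝ} (hω : ω ≠ 0) {y η : ℝ × ℝ} {s : ℝ} (hy : y ≠ 0)
    (hx : traj b ω y η s ≠ 0) (v : ℝ × ℝ) :
    HasDerivAt (fun s => dot (vel b ω y η s + A b (traj b ω y η s)) (trajVar b ω y v s))
      (fderiv ℝ (Function.uncurry (lagrangian b ω η)) (y, s) (v, 0)) s := by
  have hline : HasDerivAt (fun τ : ℝ => y + τ • v) v 0 := by
    simpa using ((hasDerivAt_id (0 : ℝ)).smul_const v).const_add y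
  have hA : HasDerivAt (fun τ : ℝ => A b (y + τ • v)) (dA b y v) 0 := by
    simpa using hasDerivAt_A_comp (b := b) hline (by simpa using hy)
  have hX : HasDerivAt (fun τ : ℝ => traj b ω (y + τ • v) η s) (trajVar b ω y v s) 0 :=
    (hline.const_smul (Real.cos (ω * s))).add
      ((hA.const_sub η).const_smul (Real.sin (ω * s) / ω))
  have hV : HasDerivAt (fun τ : ℝ => vel b ω (y + τ • v) η s) (velVar b ω y v s) 0 :=
    (hline.const_smul (-(ω * Real.sin (ω * s)))).add
      ((hA.const_sub η).const_smul (Real.cos (ω * s)))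
  have hAX := hasDerivAt_A_comp (b := b) hX (by simpa using hx)
  have hL := (((hasDerivAt_normSq2 (hV.add hAX)).sub (hasDerivAt_normSq2 hAX)).sub
    ((hasDerivAt_normSq2 hX).const_mul (ω ^ 2))).const_mul (1 / 2)
  have hF := ((contDiffAt_lagrangian hy hx).differentiableAt (by simp)).hasFDerivAt
  have hp : HasDerivAt (fun τ : ℝ => (y + τ • v, s)) (v, (0 : ℝ)) 0 :=
    hline.prodMk (hasDerivAt_const 0 s)
  have hF' := HasFDerivAt.comp_hasDerivAt_of_eq (0 : ℝ) hF hp (by simp)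
  have hval := hF'.unique hL
  have hXs := hasDerivAt_traj (b := b) hω y η s
  have hVs : HasDerivAt (vel b ω y η) (-ω ^ 2 • traj b ω y η s) s :=
    (hasDerivAt_sin_cos hω y.1 _ s).prodMk (hasDerivAt_sin_cos hω y.2 _ s)
  have hds : HasDerivAt (trajVar b ω y v) (velVar b ω y v s) s :=
    (hasDerivAt_cos_sin_div hω v.1 _ s).prodMk (hasDerivAt_cos_sin_div hω v.2 _ s)
  refine (hasDerivAt_dot (hVs.add (hasDerivAt_A_comp (b := b) hXs hx)) hds).congr_deriv ?_
  rw [hval]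
  simp [dot, dA]
  ring

/-- The gradient of the action in `y` is `(x^t_y)ᵀ ξ^t(y,η) − η`. -/
theorem action_grad_y (b ω : ℝ) (hω : 0 < ω)
    (t : ℝ) (ht : 0 ≤ t) (η : ℝ × ℝ) (y : ℝ × ℝ) (hy : y ≠ 0)
    (hne : ∀ s ∈ Set.Icc (0 : ℝ) t, traj b ω y η s ≠ 0) :
    ∃ L : ℝ × ℝ →L[ℝ] ℝ,
      HasFDerivAt (fun y' => action b ω y' η t) L y ∧
      ∀ v : ℝ × ℝ,
        L v = dot
          (toPair (Matrix.mulVec (Matrix.transpose (trajJacY b ω y t)) (toVec (xi b ω y η t))) - η)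
          v := by
  have hω' : ω ≠ 0 := hω.ne'
  have hxi : ∀ y s, xi b ω y η s = vel b ω y η s + A b (traj b ω y η s) := fun y s => by
    rw [xi, (hasDerivAt_traj hω' y η s).deriv]
  have hact : (fun y' => action b ω y' η t) =
      fun y' => ∫ s in (0 : ℝ)..t, lagrangian b ω η y' s := by
    funext y'
    simp only [action, lagrangian, intervalIntegral.integral_const_mul, hxi]
  have hne' : ∀ s ∈ Set.uIcc 0 t, traj b ω y η s ≠ 0 := by
    rwa [Set.uIcc_of_le ht]
  obtain ⟨hint, hder⟩ := hasFDerivAt_intervalIntegral_of_contDiffAt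
    (F := lagrangian b ω η) (x₀ := y) (a := 0) (b := t)
    fun s hs => contDiffAt_lagrangian hy (hne' s hs)
  refine ⟨_, hact ▸ hder, fun v => ?_⟩
  rw [ContinuousLinearMap.intervalIntegral_apply hint,
    intervalIntegral.integral_eq_sub_of_hasDerivAt
      (f := fun s => dot (vel b ω y η s + A b (traj b ω y η s)) (trajVar b ω y v s))
      (fun s hs => by simpa using hasDerivAt_dot_momentum_trajVar hω' hy (hne' s hs) v)
      ⟨hint.1.apply_continuousLinearMap v, hint.2.apply_continuousLinearMap v⟩]
  simp [hxi, dot, toPair, toVec, trajJacY, Amat, trajVar, vel, dA, normSq2, Matrix.mulVec,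
    dotProduct, Fin.sum_univ_two, Matrix.one_apply, traj]
  ring
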